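/- Let G be a connected finite simple graph on n ≥ 2 vertices containing at least one edge, and let Δ be its maximum vertex degree. Then the Q-index of G satisfies q(G) ≥ Δ + 1, with equality if and only if G is isomorphic to the star K_{1,n−1}. -/

import Mathlib

open Matrix

/-- The signless Laplacian `Q(G) = D(G) + A(G)` of a finite simple graph `G`. -/
noncomputable def signlessLaplacian {V : Type*} [Fintype V] (G : SimpleGraph V) :
    Matrix V V ℝ :=
  letI := Classical.decEq V
  letI : DecidableRel G.Adj := Classical.decRel _
  Matrix.diagonal (fun v => (G.degree v : ℝ)) + G.adjMatrix ℝ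

/-- The `Q`-index of `G`: the largest eigenvalue of the signless Laplacian `Q(G)`. -/
noncomputable def qIndex {V : Type*} [Fintype V] (G : SimpleGraph V) : ℝ :=
  letI := Classical.decEq V
  sSup (spectrum ℝ (signlessLaplacian G))

/-!
Let `u` have maximum degree `Δ` and let `x` be the Perron vector of the star formed by `u` and its
neighbours, extended by zero: `x u = Δ` and `x w = 1` for `w` adjacent to `u`. Then
`(Δ + 1) x ≤ Q x` entrywise, so the Rayleigh quotient of `x` gives `Δ + 1 ≤ q`. In case of equality
`x` is an eigenvector, and reading `Q x = (Δ + 1) x` at a neighbour `w` of `u` forces `w` to have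
degree one; if `G` is connected, it is then a star centred at `u`. Conversely `q` is at most the
maximum of `deg v + deg w` over the edges `vw` (Anderson–Morley), which is `Δ + 1` for a star.
-/

section HermitianMatrix

variable {ι : Type*} [Fintype ι] {A : Matrix ι ι ℝ} {x : ι → ℝ} {μ : ℝ}

theorem mul_dotProduct_self_le_of_smul_le_mulVec (hx : 0 ≤ x) (h : μ • x ≤ A *ᵥ x) :
    μ * (x ⬝ᵥ x) ≤ x ⬝ᵥ A *ᵥ x := by
  simpa only [dotProduct_smul, smul_eq_mul] using dotProduct_le_dotProduct_of_nonneg_left h hx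

variable [DecidableEq ι]

open scoped ComplexOrder MatrixOrder in
theorem posSemidef_algebraMap_sSup_spectrum_sub {𝕜 : Type*} [RCLike 𝕜] {A : Matrix ι ι 𝕜}
    (hA : A.IsHermitian) :
    (algebraMap ℝ (Matrix ι ι 𝕜) (sSup (spectrum ℝ A)) - A).PosSemidef :=
  Matrix.le_iff.1 <| le_algebraMap_of_spectrum_le
    (fun _ hμ ↦ le_csSup Matrix.finite_real_spectrum.bddAbove hμ) hA

theorem exists_mulVec_eq_smul_of_mem_spectrum {K : Type*} [Field K] {A : Matrix ι ι K} {μ : K}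
    (hμ : μ ∈ spectrum K A) : ∃ x ≠ 0, A *ᵥ x = μ • x := by
  rw [← Matrix.spectrum_toLin', ← Module.End.hasEigenvalue_iff_mem_spectrum] at hμ
  obtain ⟨x, hx⟩ := hμ.exists_hasEigenvector
  exact ⟨x, hx.2, by simpa using hx.apply_eq_smul⟩

theorem algebraMap_sub_mulVec {R : Type*} [CommRing R] (A : Matrix ι ι R) (μ : R) (x : ι → R) :
    (algebraMap R (Matrix ι ι R) μ - A) *ᵥ x = μ • x - A *ᵥ x := by
  rw [sub_mulVec, Algebra.algebraMap_eq_smul_one, smul_mulVec, one_mulVec]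

theorem dotProduct_mulVec_le_sSup_spectrum_mul (hA : A.IsHermitian) (x : ι → ℝ) :
    x ⬝ᵥ A *ᵥ x ≤ sSup (spectrum ℝ A) * (x ⬝ᵥ x) := by
  have h := (posSemidef_algebraMap_sSup_spectrum_sub hA).dotProduct_mulVec_nonneg x
  rwa [algebraMap_sub_mulVec, star_trivial, dotProduct_sub, dotProduct_smul, smul_eq_mul,
    sub_nonneg] at h

theorem mulVec_eq_sSup_spectrum_smul_iff (hA : A.IsHermitian) :
    A *ᵥ x = sSup (spectrum ℝ A) • x ↔ x ⬝ᵥ A *ᵥ x = sSup (spectrum ℝ A) * (x ⬝ᵥ x) := by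
  have h := (posSemidef_algebraMap_sSup_spectrum_sub hA).dotProduct_mulVec_zero_iff x
  rw [algebraMap_sub_mulVec, star_trivial, dotProduct_sub, dotProduct_smul, smul_eq_mul,
    sub_eq_zero, sub_eq_zero] at h
  rw [eq_comm, ← h, eq_comm]

theorem le_sSup_spectrum_of_smul_le_mulVec (hA : A.IsHermitian) (hx : 0 ≤ x) (hx₀ : x ≠ 0)
    (h : μ • x ≤ A *ᵥ x) : μ ≤ sSup (spectrum ℝ A) := by
  have hpos : 0 < x ⬝ᵥ x := dotProduct_star_self_pos_iff.2 hx₀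
  exact le_of_mul_le_mul_right ((mul_dotProduct_self_le_of_smul_le_mulVec hx h).trans
    (dotProduct_mulVec_le_sSup_spectrum_mul hA x)) hpos

theorem mulVec_eq_sSup_spectrum_smul_of_smul_le_mulVec (hA : A.IsHermitian) (hx : 0 ≤ x)
    (h : sSup (spectrum ℝ A) • x ≤ A *ᵥ x) : A *ᵥ x = sSup (spectrum ℝ A) • x :=
  (mulVec_eq_sSup_spectrum_smul_iff hA).2
    ((dotProduct_mulVec_le_sSup_spectrum_mul hA x).antisymm
      (mul_dotProduct_self_le_of_smul_le_mulVec hx h))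

end HermitianMatrix

section StarGraph

open SimpleGraph

variable {V W : Type*} {G : SimpleGraph V}

theorem completeBipartiteGraph_eq_starGraph (α β : Type*) [Unique α] :
    completeBipartiteGraph α β = starGraph (Sum.inl default) := by
  ext (a | b) (a' | b') <;> simp [Unique.eq_default]

theorem eq_starGraph_symm_of_iso {s : W} (φ : G ≃g starGraph s) : G = starGraph (φ.symm s) := by
  ext v w
  rw [← φ.map_adj_iff]
  simp [starGraph_adj, RelIso.eq_symm_apply]

theorem nonempty_iso_starGraph_iff (e : V ≃ W) (s : W) :
    Nonempty (G ≃g starGraph s) ↔ ∃ r, G = starGraph r := by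
  classical
  refine ⟨fun ⟨φ⟩ ↦ ⟨_, eq_starGraph_symm_of_iso φ⟩, ?_⟩
  rintro ⟨r, rfl⟩
  let f : V ≃ W := e.trans (Equiv.swap (e r) s)
  have hf : f r = s := by simp [f]
  exact ⟨f, by simp [starGraph_adj, ← hf]⟩

theorem nonempty_iso_completeBipartiteGraph_fin_one_iff [Fintype V] [Nonempty V] :
    Nonempty (G ≃g completeBipartiteGraph (Fin 1) (Fin (Fintype.card V - 1))) ↔
      ∃ r, G = starGraph r := by
  have e : V ≃ Fin 1 ⊕ Fin (Fintype.card V - 1) := Fintype.equivOfCardEq <| by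
    rw [Fintype.card_sum, Fintype.card_fin, Fintype.card_fin,
      Nat.add_sub_cancel' Fintype.card_pos]
  rw [completeBipartiteGraph_eq_starGraph]
  exact nonempty_iso_starGraph_iff e _

theorem eq_starGraph_of_forall_adj_degree_eq_one [G.LocallyFinite] (hG : G.Preconnected) {u : V}
    (h : ∀ w, G.Adj u w → G.degree w = 1) : G = starGraph u := by
  have eq_of_adj {w z : V} (huw : G.Adj u w) (hwz : G.Adj w z) : z = u :=
    (degree_eq_one_iff_existsUnique_adj.1 (h w huw)).unique hwz huw.symm
  have eq_or_adj (v : V) : v = u ∨ G.Adj u v := by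
    induction (reachable_iff_reflTransGen u v).1 (hG u v) with
    | refl => exact .inl rfl
    | tail _ hvw ih =>
      rcases ih with rfl | huv
      · exact .inr hvw
      · exact .inl (eq_of_adj huv hvw)
  ext v w
  rw [starGraph_adj]
  constructor
  · intro hvw
    exact ⟨hvw.ne, (eq_or_adj v).imp_right fun huv ↦ eq_of_adj huv hvw⟩
  · rintro ⟨hne, rfl | rfl⟩
    · exact (eq_or_adj w).resolve_left hne.symm
    · exact ((eq_or_adj v).resolve_left hne).symm

theorem degree_add_degree_le_maxDegree_add_one_of_adj_starGraph [Fintype V] {r : V}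
    [DecidableRel (starGraph r).Adj] {v w : V} (h : (starGraph r).Adj v w) :
    (starGraph r).degree v + (starGraph r).degree w ≤ (starGraph r).maxDegree + 1 := by
  classical
  have degree_of_ne {z : V} (hz : z ≠ r) : (starGraph r).degree z = 1 := by
    convert degree_starGraph_of_ne_center hz
  have hv := degree_le_maxDegree (starGraph r) v
  have hw := degree_le_maxDegree (starGraph r) w
  obtain ⟨hne, rfl | rfl⟩ := starGraph_adj.1 h
  · rw [degree_of_ne hne.symm]; omega
  · rw [degree_of_ne hne]; omega

end StarGraph

section SignlessLaplacian

open SimpleGraph Finset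

variable {V : Type*} [Fintype V] (G : SimpleGraph V)

theorem isHermitian_signlessLaplacian : (signlessLaplacian G).IsHermitian := by
  classical
  exact (isHermitian_diagonal _).add (isHermitian_adjMatrix ℝ G)

theorem qIndex_eq_sSup_spectrum [DecidableEq V] :
    qIndex G = sSup (spectrum ℝ (signlessLaplacian G)) := by
  unfold qIndex
  congr!

variable [DecidableRel G.Adj]

theorem maxDegree_eq_sup_degree : G.maxDegree = univ.sup fun v ↦ G.degree v :=
  le_antisymm
    (G.maxDegree_le_of_forall_degree_le _ fun v ↦ le_sup (f := fun v ↦ G.degree v) (mem_univ v))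
    (Finset.sup_le fun v _ ↦ G.degree_le_maxDegree v)

theorem signlessLaplacian_mulVec_apply (x : V → ℝ) (v : V) :
    (signlessLaplacian G *ᵥ x) v = ∑ w ∈ G.neighborFinset v, (x v + x w) := by
  classical
  have hQ : signlessLaplacian G =
      Matrix.diagonal (fun v ↦ (G.degree v : ℝ)) + G.adjMatrix ℝ := by
    unfold signlessLaplacian
    congr!
  rw [hQ, add_mulVec, Pi.add_apply, mulVec_diagonal, adjMatrix_mulVec_apply, sum_add_distrib,
    sum_const, card_neighborFinset_eq_degree, nsmul_eq_mul]

variable {G}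

theorem abs_signlessLaplacian_mulVec_apply_le {x : V → ℝ} {v : V} {c : ℝ}
    (h : ∀ w, G.Adj v w → |x v + x w| ≤ c) :
    |(signlessLaplacian G *ᵥ x) v| ≤ G.degree v * c := by
  rw [signlessLaplacian_mulVec_apply, ← card_neighborFinset_eq_degree, ← nsmul_eq_mul]
  exact (abs_sum_le_sum_abs _ _).trans <|
    sum_le_card_nsmul _ _ _ fun w hw ↦ h w ((mem_neighborFinset ..).1 hw)

/-- The Anderson–Morley bound. For an eigenvector `x` with eigenvalue `μ > 0`, it is obtained by
estimating `μ (x v + x w) = (Q x) v + (Q x) w` at an edge `vw` where `|x v + x w|` is largest. -/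
theorem qIndex_le_of_forall_adj_degree_add_degree_le {m : ℕ}
    (h : ∀ v w, G.Adj v w → G.degree v + G.degree w ≤ m) : qIndex G ≤ m := by
  classical
  rw [qIndex_eq_sSup_spectrum]
  refine Real.sSup_le (fun μ hμ ↦ ?_) m.cast_nonneg
  by_contra! hmμ
  have hμ_pos : 0 < μ := m.cast_nonneg.trans_lt hmμ
  obtain ⟨x, hx₀, hx⟩ := exists_mulVec_eq_smul_of_mem_spectrum hμ
  obtain ⟨d₀, hd₀⟩ : ∃ d : G.Dart, x d.fst + x d.snd ≠ 0 := by
    obtain ⟨v, hv⟩ := Function.ne_iff.1 hx₀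
    have hQv : (signlessLaplacian G *ᵥ x) v ≠ 0 := by
      rw [hx]
      exact mul_ne_zero hμ_pos.ne' hv
    rw [signlessLaplacian_mulVec_apply] at hQv
    obtain ⟨w, hw, hvw⟩ := exists_ne_zero_of_sum_ne_zero hQv
    exact ⟨⟨(v, w), (mem_neighborFinset ..).1 hw⟩, hvw⟩
  have : Nonempty G.Dart := ⟨d₀⟩
  obtain ⟨⟨⟨v, w⟩, hvw⟩, hmax⟩ := Finite.exists_max fun d : G.Dart ↦ |x d.fst + x d.snd|
  have hpos : 0 < |x v + x w| := (abs_pos.2 hd₀).trans_le (hmax d₀)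
  have hv : |μ * x v| ≤ G.degree v * |x v + x w| := by
    simpa [hx] using abs_signlessLaplacian_mulVec_apply_le fun z hvz ↦ hmax ⟨(v, z), hvz⟩
  have hw : |μ * x w| ≤ G.degree w * |x v + x w| := by
    simpa [hx] using abs_signlessLaplacian_mulVec_apply_le fun z hwz ↦ hmax ⟨(w, z), hwz⟩
  refine hmμ.not_ge (le_of_mul_le_mul_right ?_ hpos)
  calc μ * |x v + x w| = |μ * x v + μ * x w| := by rw [← mul_add, abs_mul, abs_of_pos hμ_pos]
    _ ≤ |μ * x v| + |μ * x w| := abs_add_le _ _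
    _ ≤ (G.degree v + G.degree w : ℕ) * |x v + x w| := by push_cast; linarith
    _ ≤ m * |x v + x w| := by gcongr; exact h v w hvw

open scoped Classical in
/-- The Perron vector of the star formed by `u` and its neighbours, extended by zero to all of `V`
and scaled so that the leaves have weight one. -/
noncomputable def starVector (G : SimpleGraph V) [DecidableRel G.Adj] (u : V) : V → ℝ :=
  fun v ↦ if v = u then (G.degree u : ℝ) else if G.Adj u v then 1 else 0

variable {u v w : V}

theorem starVector_self : starVector G u u = G.degree u := if_pos rfl

theorem starVector_of_adj (h : G.Adj u w) : starVector G u w = 1 := by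
  simp [starVector, h, h.ne']

theorem starVector_of_ne_of_not_adj (hne : v ≠ u) (h : ¬G.Adj u v) : starVector G u v = 0 := by
  simp [starVector, hne, h]

theorem starVector_nonneg : 0 ≤ starVector G u := by
  intro v
  unfold starVector
  split_ifs <;> simp

theorem starVector_ne_zero (hu : 0 < G.degree u) : starVector G u ≠ 0 :=
  Function.ne_iff.2 ⟨u, by simpa [starVector_self] using hu.ne'⟩

theorem signlessLaplacian_mulVec_starVector_self :
    (signlessLaplacian G *ᵥ starVector G u) u = G.degree u * (G.degree u + 1) := by
  rw [signlessLaplacian_mulVec_apply, ← nsmul_eq_mul, ← card_neighborFinset_eq_degree,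
    ← sum_const]
  refine sum_congr rfl fun w hw ↦ ?_
  rw [starVector_self, starVector_of_adj ((mem_neighborFinset ..).1 hw),
    card_neighborFinset_eq_degree]

theorem degree_add_degree_le_signlessLaplacian_mulVec_starVector (h : G.Adj u w) :
    (G.degree u + G.degree w : ℝ) ≤ (signlessLaplacian G *ᵥ starVector G u) w := by
  have hsum : starVector G u u ≤ ∑ z ∈ G.neighborFinset w, starVector G u z :=
    single_le_sum (fun z _ ↦ starVector_nonneg z) ((mem_neighborFinset ..).2 h.symm)
  rw [signlessLaplacian_mulVec_apply, sum_add_distrib, starVector_of_adj h, sum_const,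
    card_neighborFinset_eq_degree, nsmul_one]
  rw [starVector_self] at hsum
  linarith

theorem smul_starVector_le_signlessLaplacian_mulVec (G : SimpleGraph V) [DecidableRel G.Adj]
    (u : V) :
    (G.degree u + 1 : ℝ) • starVector G u ≤ signlessLaplacian G *ᵥ starVector G u := by
  intro v
  rw [Pi.smul_apply, smul_eq_mul]
  obtain rfl | hne := eq_or_ne v u
  · rw [signlessLaplacian_mulVec_starVector_self, starVector_self, mul_comm]
  by_cases huv : G.Adj u v
  · have hdeg : (1 : ℝ) ≤ G.degree v := by
      exact_mod_cast (G.degree_pos_iff_exists_adj v).2 ⟨u, huv.symm⟩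
    rw [starVector_of_adj huv, mul_one]
    refine le_trans ?_ (degree_add_degree_le_signlessLaplacian_mulVec_starVector huv)
    gcongr
  · rw [starVector_of_ne_of_not_adj hne huv, mul_zero, signlessLaplacian_mulVec_apply]
    exact sum_nonneg fun w _ ↦ add_nonneg (starVector_nonneg v) (starVector_nonneg w)

theorem degree_add_one_le_qIndex (hu : 0 < G.degree u) : (G.degree u + 1 : ℝ) ≤ qIndex G := by
  classical
  rw [qIndex_eq_sSup_spectrum]
  exact le_sSup_spectrum_of_smul_le_mulVec (isHermitian_signlessLaplacian G) starVector_nonneg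
    (starVector_ne_zero hu) (smul_starVector_le_signlessLaplacian_mulVec G u)

theorem degree_eq_one_of_qIndex_eq_degree_add_one (hq : qIndex G = G.degree u + 1)
    (h : G.Adj u w) : G.degree w = 1 := by
  classical
  have hQ : signlessLaplacian G *ᵥ starVector G u = qIndex G • starVector G u := by
    have hle := smul_starVector_le_signlessLaplacian_mulVec G u
    rw [← hq] at hle
    rw [qIndex_eq_sSup_spectrum] at hle ⊢
    exact mulVec_eq_sSup_spectrum_smul_of_smul_le_mulVec (isHermitian_signlessLaplacian G)
      starVector_nonneg hle
  have hle := degree_add_degree_le_signlessLaplacian_mulVec_starVector h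
  rw [hQ, Pi.smul_apply, starVector_of_adj h, hq, smul_eq_mul, mul_one] at hle
  have hw : G.degree w ≤ 1 := by exact_mod_cast le_of_add_le_add_left hle
  exact hw.antisymm ((G.degree_pos_iff_exists_adj w).2 ⟨u, h.symm⟩)

theorem maxDegree_add_one_le_qIndex (hG : G ≠ ⊥) : (G.maxDegree + 1 : ℝ) ≤ qIndex G := by
  obtain ⟨v, w, hvw⟩ := ne_bot_iff_exists_adj.1 hG
  have : Nonempty V := ⟨v⟩
  obtain ⟨u, hu⟩ := G.exists_maximal_degree_vertex
  rw [hu]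
  refine degree_add_one_le_qIndex (hu ▸ ?_)
  exact ((G.degree_pos_iff_exists_adj v).2 ⟨w, hvw⟩).trans_le (G.degree_le_maxDegree v)

theorem exists_eq_starGraph_of_qIndex_eq (hG : G.Connected) (hq : qIndex G = G.maxDegree + 1) :
    ∃ r, G = starGraph r := by
  have := hG.nonempty
  obtain ⟨u, hu⟩ := G.exists_maximal_degree_vertex
  rw [hu] at hq
  exact ⟨u, eq_starGraph_of_forall_adj_degree_eq_one hG.preconnected fun _ ↦
    degree_eq_one_of_qIndex_eq_degree_add_one hq⟩

theorem qIndex_starGraph_le (r : V) [DecidableRel (starGraph r).Adj] :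
    qIndex (starGraph r) ≤ (starGraph r).maxDegree + 1 := by
  exact_mod_cast qIndex_le_of_forall_adj_degree_add_degree_le fun _ _ ↦
    degree_add_degree_le_maxDegree_add_one_of_adj_starGraph

theorem stmt_19_general (hG : G ≠ ⊥) :
    (G.maxDegree + 1 : ℝ) ≤ qIndex G ∧
      (G.Connected ∧ qIndex G = G.maxDegree + 1 ↔
        Nonempty (G ≃g completeBipartiteGraph (Fin 1) (Fin (Fintype.card V - 1)))) := by
  have hle := maxDegree_add_one_le_qIndex hG
  have : Nonempty V := (ne_bot_iff_exists_adj.1 hG).nonempty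
  rw [nonempty_iso_completeBipartiteGraph_fin_one_iff]
  refine ⟨hle, fun ⟨hconn, hq⟩ ↦ exists_eq_starGraph_of_qIndex_eq hconn hq, ?_⟩
  rintro ⟨r, rfl⟩
  exact ⟨connected_starGraph r, (qIndex_starGraph_le r).antisymm hle⟩

end SignlessLaplacian

/-- for a connected graph `G` on `n ≥ 2` vertices with at least one edge
and maximum degree `Δ`, one has `q(G) ≥ Δ + 1`, with equality iff `G ≅ K_{1,n-1}`. -/
theorem stmt_19 (n : ℕ) (hn : 2 ≤ n) (G : SimpleGraph (Fin n)) [DecidableRel G.Adj]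
    (hconn : G.Connected) (hedge : G.edgeSet.Nonempty) :
    ((Finset.univ.sup (fun v => G.degree v) : ℕ) : ℝ) + 1 ≤ qIndex G ∧
      (qIndex G = ((Finset.univ.sup (fun v => G.degree v) : ℕ) : ℝ) + 1 ↔
        Nonempty (G ≃g completeBipartiteGraph (Fin 1) (Fin (n - 1)))) := by
  have h := stmt_19_general (SimpleGraph.edgeSet_nonempty.1 hedge)
  rwa [and_iff_right hconn, maxDegree_eq_sup_degree, Fintype.card_fin] at h
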